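/- Let Σ_θ and Σ_n be symmetric positive definite N×N real matrices. Then every entry of ΔΣ = Σ_θ⁻¹ − (Σ_θ + Σ_n)⁻¹ satisfies |ΔΣ(i,j)| ≤ σ_max(Σ_n) / σ_min(Σ_θ)², where σ_max, σ_min denote the largest and smallest eigenvalues. -/

import Mathlib

open Finset

open scoped Matrix MatrixOrder

namespace Matrix

variable {n : Type*} [Fintype n]

/-- A matrix bounded below by `c ≥ 0` as a quadratic form expands lengths by at least `c`. -/
theorem sq_mul_dotProduct_le {A : Matrix n n ℝ} {c : ℝ} (hc : 0 ≤ c) (x : n → ℝ)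
    (h : c * (x ⬝ᵥ x) ≤ x ⬝ᵥ A *ᵥ x) : c ^ 2 * (x ⬝ᵥ x) ≤ A *ᵥ x ⬝ᵥ A *ᵥ x := by
  have h1 : 0 ≤ (A *ᵥ x - c • x) ⬝ᵥ (A *ᵥ x - c • x) := by
    simpa using dotProduct_star_self_nonneg (A *ᵥ x - c • x)
  simp only [dotProduct_sub, sub_dotProduct, dotProduct_smul, smul_dotProduct, smul_eq_mul,
    dotProduct_comm (A *ᵥ x) x] at h1
  nlinarith [mul_le_mul_of_nonneg_left h hc]

variable [DecidableEq n]

theorem IsHermitian.dotProduct_mulVec_le {A : Matrix n n ℝ} (hA : A.IsHermitian) {c : ℝ}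
    (hc : ∀ i, hA.eigenvalues i ≤ c) (x : n → ℝ) : x ⬝ᵥ A *ᵥ x ≤ c * (x ⬝ᵥ x) := by
  have h : A ≤ algebraMap ℝ _ c := by
    refine le_algebraMap_of_spectrum_le ?_ hA
    rw [hA.spectrum_real_eq_range_eigenvalues]
    rintro _ ⟨i, rfl⟩
    exact hc i
  have := (Matrix.le_iff.mp h).dotProduct_mulVec_nonneg x
  simp only [star_trivial, Algebra.algebraMap_eq_smul_one, sub_mulVec, smul_mulVec, one_mulVec,
    dotProduct_sub, dotProduct_smul, smul_eq_mul] at this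
  linarith

theorem IsHermitian.le_dotProduct_mulVec {A : Matrix n n ℝ} (hA : A.IsHermitian) {c : ℝ}
    (hc : ∀ i, c ≤ hA.eigenvalues i) (x : n → ℝ) : c * (x ⬝ᵥ x) ≤ x ⬝ᵥ A *ᵥ x := by
  have h : algebraMap ℝ _ c ≤ A := by
    refine algebraMap_le_of_le_spectrum ?_ hA
    rw [hA.spectrum_real_eq_range_eigenvalues]
    rintro _ ⟨i, rfl⟩
    exact hc i
  have := (Matrix.le_iff.mp h).dotProduct_mulVec_nonneg x
  simp only [star_trivial, Algebra.algebraMap_eq_smul_one, sub_mulVec, smul_mulVec, one_mulVec,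
    dotProduct_sub, dotProduct_smul, smul_eq_mul] at this
  linarith

theorem abs_apply_le_of_dotProduct_mulVec_le {D : Matrix n n ℝ} {K : ℝ} (hD : D.PosSemidef)
    (hK : ∀ x, x ⬝ᵥ D *ᵥ x ≤ K * (x ⬝ᵥ x)) (i j : n) : |D i j| ≤ K := by
  have hsymm : D j i = D i j := by simpa using hD.1.apply i j
  have hK1 (i : n) : 0 ≤ D i i ∧ D i i ≤ K := by
    have h1 := hK (Pi.single i 1)
    have h2 := hD.dotProduct_mulVec_nonneg (Pi.single i 1)
    simp at h1 h2
    exact ⟨h2, h1⟩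
  rcases eq_or_ne i j with rfl | hij
  · rw [abs_of_nonneg (hK1 i).1]
    exact (hK1 i).2
  have h1 := hD.dotProduct_mulVec_nonneg (Pi.single i 1 + Pi.single j 1)
  have h2 := hD.dotProduct_mulVec_nonneg (Pi.single i 1 - Pi.single j 1)
  simp [mulVec_add, mulVec_sub, hsymm] at h1 h2
  rw [abs_le]
  constructor <;> linarith [hK1 i, hK1 j, (hK1 i).2, (hK1 j).2]

/-- A special case of the Woodbury identity. -/
theorem PosDef.inv_sub_inv_add {S T : Matrix n n ℝ} (hS : S.PosDef) (hT : T.PosDef) :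
    S⁻¹ - (S + T)⁻¹ = S⁻¹ * (T⁻¹ + S⁻¹)⁻¹ * S⁻¹ := by
  have hS' := (isUnit_iff_isUnit_det S).mp hS.isUnit
  have hT' := (isUnit_iff_isUnit_det T).mp hT.isUnit
  have h : T⁻¹ + S⁻¹ = S⁻¹ * (S + T) * T⁻¹ := by
    rw [mul_add, add_mul, nonsing_inv_mul _ hS', one_mul, mul_nonsing_inv_cancel_right _ _ hT']
  rw [h, mul_inv_rev, mul_inv_rev, nonsing_inv_nonsing_inv _ hS', nonsing_inv_nonsing_inv _ hT']
  simp only [mul_assoc, mul_nonsing_inv _ hS', mul_one]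
  rw [inv_sub_inv (iff_of_true hS.isUnit (hS.add hT).isUnit), add_sub_cancel_left, mul_assoc]

theorem PosDef.posSemidef_inv_sub_inv_add {S T : Matrix n n ℝ} (hS : S.PosDef) (hT : T.PosDef) :
    (S⁻¹ - (S + T)⁻¹).PosSemidef := by
  rw [hS.inv_sub_inv_add hT]
  have := (hT.inv.add hS.inv).inv.posSemidef.mul_mul_conjTranspose_same S⁻¹
  rwa [hS.inv.1.eq] at this

theorem PosDef.dotProduct_inv_sub_inv_add_mulVec_le {S T : Matrix n n ℝ} (hS : S.PosDef)
    (hT : T.PosDef) (x : n → ℝ) :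
    x ⬝ᵥ (S⁻¹ - (S + T)⁻¹) *ᵥ x ≤ S⁻¹ *ᵥ x ⬝ᵥ T *ᵥ (S⁻¹ *ᵥ x) := by
  have hR : S⁻¹ * T * S⁻¹ - (S⁻¹ - (S + T)⁻¹) = S⁻¹ * T * (S + T)⁻¹ * (S⁻¹ * T)ᴴ := by
    have h1 : S⁻¹ - (S + T)⁻¹ = S⁻¹ * T * (S + T)⁻¹ := by
      rw [inv_sub_inv (iff_of_true hS.isUnit (hS.add hT).isUnit), add_sub_cancel_left]
    have h2 : S⁻¹ - (S + T)⁻¹ = (S + T)⁻¹ * T * S⁻¹ := by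
      rw [← neg_sub, inv_sub_inv (iff_of_true (hS.add hT).isUnit hS.isUnit), sub_add_cancel_left,
        mul_neg, neg_mul, neg_neg]
    rw [conjTranspose_mul, hS.inv.1.eq, hT.1.eq]
    calc _ = S⁻¹ * T * S⁻¹ - S⁻¹ * T * (S + T)⁻¹ := by rw [h1]
      _ = S⁻¹ * T * (S⁻¹ - (S + T)⁻¹) := by rw [mul_sub]
      _ = _ := by rw [h2]; simp only [mul_assoc]
  have hpos := (hS.add hT).inv.posSemidef.mul_mul_conjTranspose_same (S⁻¹ * T)
  rw [← hR] at hpos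
  have := hpos.dotProduct_mulVec_nonneg x
  rw [sub_mulVec, dotProduct_sub, star_trivial, sub_nonneg] at this
  refine this.trans_eq ?_
  rw [← mulVec_mulVec, ← mulVec_mulVec, dotProduct_mulVec, ← mulVec_transpose]
  congr 2
  simpa using hS.inv.1.eq

end Matrix

/-- For symmetric positive definite `Σθ`, `Σn`, every entry of
`ΔΣ = Σθ⁻¹ − (Σθ + Σn)⁻¹` satisfies `|ΔΣ(i,j)| ≤ σ_max(Σn) / σ_min(Σθ)²`, where
`σ_max`/`σ_min` are largest/smallest eigenvalues. -/
theorem delta_inverse_entry_bound {N : ℕ} [NeZero N]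
    (St Sn : Matrix (Fin N) (Fin N) ℝ) (hSt : St.PosDef) (hSn : Sn.PosDef) :
    ∀ i j, |(St⁻¹ - (St + Sn)⁻¹) i j| ≤
      (univ.sup' univ_nonempty hSn.1.eigenvalues) /
        (univ.inf' univ_nonempty hSt.1.eigenvalues) ^ 2 := by
  set c := univ.sup' univ_nonempty hSn.1.eigenvalues
  set m := univ.inf' univ_nonempty hSt.1.eigenvalues
  have hm : 0 < m := (lt_inf'_iff _).mpr fun i _ => hSt.eigenvalues_pos i
  have hc : 0 ≤ c := (hSn.eigenvalues_pos 0).le.trans (le_sup' _ (mem_univ 0))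
  refine Matrix.abs_apply_le_of_dotProduct_mulVec_le (hSt.posSemidef_inv_sub_inv_add hSn)
    fun x => ?_
  have h1 := hSt.dotProduct_inv_sub_inv_add_mulVec_le hSn x
  have h2 := hSn.1.dotProduct_mulVec_le (c := c) (fun i => le_sup' _ (mem_univ i)) (St⁻¹ *ᵥ x)
  have h3 := Matrix.sq_mul_dotProduct_le hm.le _
    (hSt.1.le_dotProduct_mulVec (c := m) (fun i => inf'_le _ (mem_univ i)) (St⁻¹ *ᵥ x))
  rw [Matrix.mulVec_mulVec, Matrix.mul_nonsing_inv _
    ((Matrix.isUnit_iff_isUnit_det St).mp hSt.isUnit), Matrix.one_mulVec] at h3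
  refine (h1.trans h2).trans ?_
  rw [div_mul_eq_mul_div, le_div_iff₀ (by positivity)]
  calc _ = c * (m ^ 2 * (St⁻¹ *ᵥ x ⬝ᵥ St⁻¹ *ᵥ x)) := by ring
    _ ≤ _ := mul_le_mul_of_nonneg_left h3 hc
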